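/- Let p be a prime, q a power of p, R a commutative ring of characteristic p, I ⊆ R an ideal, and n ≥ 1. Let σ be the ring endomorphism of n×n matrices over the Laurent series ring R((z)) that applies a ↦ a^q to every coefficient of every entry. For matrices x, x' over R((z)) and m ≥ 1 write x ≡ x' mod I^m if every coefficient of every entry of x − x' lies in I^m. Let y and s be invertible n×n matrices over R((z)) with s ≡ y mod I. Define g_0 = 1 and g_{k+1} = s·σ(g_k)·y^{−1}. Then for every k ≥ 0: (a) g_k is invertible and g_k ≡ 1 mod I; (b) g_{k+1} ≡ g_k mod I^{q^k}; (c) g_k·y ≡ s·σ(g_k) mod I^{q^k}, i.e. y ≡ g_k^{−1}·s·σ(g_k) mod I^{q^k}; and (d) g_k is unique modulo I^{q^k} with properties (a) and (c): if h is an invertible n×n matrix over R((z)) with h ≡ 1 mod I and h·y ≡ s·σ(h) mod I^{q^k}, then h ≡ g_k mod I^{q^k}. (The inductive σ-conjugation approximation from the proof of Lemma 5.2.) -/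

import Mathlib

/-- Two matrices over `R((z))` are congruent modulo an ideal `J ⊆ R`
(coefficientwise): every coefficient of every entry of `x - x'` lies in `J`. -/
def MatCong {R : Type*} [CommRing R] {n : ℕ}
    (x x' : Matrix (Fin n) (Fin n) (LaurentSeries R)) (J : Ideal R) : Prop :=
  ∀ (i j : Fin n) (t : ℤ), ((x - x') i j).coeff t ∈ J

theorem MatCong.symm' {R : Type*} [CommRing R] {n : ℕ}
    {x x' : Matrix (Fin n) (Fin n) (LaurentSeries R)} {J : Ideal R} (h : MatCong x x' J) :
    MatCong x' x J := by
  intro i j t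
  have := J.neg_mem (h i j t)
  rwa [← HahnSeries.coeff_neg, ← Matrix.neg_apply, neg_sub] at this

theorem MatCong.trans' {R : Type*} [CommRing R] {n : ℕ}
    {x x' x'' : Matrix (Fin n) (Fin n) (LaurentSeries R)} {J : Ideal R} (h : MatCong x x' J)
    (h' : MatCong x' x'' J) : MatCong x x'' J := by
  intro i j t
  have := J.add_mem (h i j t) (h' i j t)
  rwa [← HahnSeries.coeff_add, ← Matrix.add_apply, sub_add_sub_cancel] at this

theorem MatCong.mono' {R : Type*} [CommRing R] {n : ℕ}
    {x x' : Matrix (Fin n) (Fin n) (LaurentSeries R)} {J K : Ideal R} (h : MatCong x x' J)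
    (hJ : J ≤ K) : MatCong x x' K := fun i j t => hJ (h i j t)

theorem coeff_mul_mem' {R : Type*} [CommRing R] (J : Ideal R) (a b : LaurentSeries R)
    (hb : ∀ t, b.coeff t ∈ J) (t : ℤ) : (a * b).coeff t ∈ J := by
  rw [HahnSeries.coeff_mul]
  exact J.sum_mem fun c _ => J.mul_mem_left _ (hb _)

theorem coeff_sum' {R : Type*} [CommRing R] {n : ℕ} (f : Fin n → LaurentSeries R) (t : ℤ) :
    (∑ i, f i).coeff t = ∑ i, (f i).coeff t :=
  map_sum (HahnSeries.coeff.addMonoidHom t) f Finset.univ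

theorem MatCong.mul_left' {R : Type*} [CommRing R] {n : ℕ}
    {x x' : Matrix (Fin n) (Fin n) (LaurentSeries R)} {J : Ideal R} (h : MatCong x x' J)
    (a : Matrix (Fin n) (Fin n) (LaurentSeries R)) : MatCong (a * x) (a * x') J := by
  intro i j t
  rw [← mul_sub, Matrix.mul_apply, coeff_sum']
  exact J.sum_mem fun c _ => coeff_mul_mem' J _ _ (h c j) t

theorem MatCong.mul_right' {R : Type*} [CommRing R] {n : ℕ}
    {x x' : Matrix (Fin n) (Fin n) (LaurentSeries R)} {J : Ideal R} (h : MatCong x x' J)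
    (a : Matrix (Fin n) (Fin n) (LaurentSeries R)) : MatCong (x * a) (x' * a) J := by
  intro i j t
  rw [← sub_mul, Matrix.mul_apply, coeff_sum']
  refine J.sum_mem fun c _ => ?_
  rw [mul_comm]
  exact coeff_mul_mem' J _ _ (h i c) t

theorem coeff_mul_frob {R : Type*} [CommRing R] (φ : R →+* R) (a b a' b' : LaurentSeries R)
    (ha : ∀ t, a'.coeff t = φ (a.coeff t)) (hb : ∀ t, b'.coeff t = φ (b.coeff t)) (t : ℤ) :
    (a' * b').coeff t = φ ((a * b).coeff t) := by
  have h1 : a'.support ⊆ a.support := by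
    intro u hu h0
    apply hu
    rw [ha, h0, map_zero]
  have h2 : b'.support ⊆ b.support := by
    intro u hu h0
    apply hu
    rw [hb, h0, map_zero]
  rw [HahnSeries.coeff_mul, HahnSeries.coeff_mul, map_sum]
  simp only [map_mul, ← ha, ← hb]
  refine Finset.sum_subset (fun c hc => ?_) (fun c hc hc' => ?_)
  · rw [Finset.mem_addAntidiagonal] at hc ⊢
    exact ⟨h1 hc.1, h2 hc.2.1, hc.2.2⟩
  · rw [Finset.mem_addAntidiagonal] at hc hc'
    by_cases h : a'.coeff c.1 = 0
    · rw [h, zero_mul]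
    by_cases h' : b'.coeff c.2 = 0
    · rw [h', mul_zero]
    exact absurd ⟨h, h', hc.2.2⟩ hc'

/-- The inductive σ-conjugation approximation from the proof of Lemma 5.2: over a
commutative ring `R` of characteristic `p` with an ideal `I`, with `σ` the
coefficientwise `q`-Frobenius on matrices over `R((z))`, and invertible matrices
`y`, `s` with `s ≡ y mod I`, the sequence `g 0 = 1`, `g (k+1) = s·σ(g k)·y⁻¹`
satisfies: (a) `g k` is invertible and `g k ≡ 1 mod I`; (b) `g (k+1) ≡ g k mod
I^{q^k}`; (c) `g k · y ≡ s·σ(g k) mod I^{q^k}`; and (d) `g k` is the unique such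
element modulo `I^{q^k}`. -/
theorem sigma_conjugation_approximation (p : ℕ) (hp : p.Prime) (s0 : ℕ) (hs0 : 0 < s0)
    (q : ℕ) (hq : q = p ^ s0) (R : Type*) [CommRing R] [CharP R p] (I : Ideal R)
    (n : ℕ) (hn : 0 < n)
    (σ : Matrix (Fin n) (Fin n) (LaurentSeries R) → Matrix (Fin n) (Fin n) (LaurentSeries R))
    (hσ : ∀ (A : Matrix (Fin n) (Fin n) (LaurentSeries R)) (i j : Fin n) (t : ℤ),
      (σ A i j).coeff t = ((A i j).coeff t) ^ q)
    (y yi ss : Matrix (Fin n) (Fin n) (LaurentSeries R))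
    (hyyi : y * yi = 1) (hyiy : yi * y = 1) (hss : IsUnit ss)
    (hsy : MatCong ss y I)
    (g : ℕ → Matrix (Fin n) (Fin n) (LaurentSeries R))
    (hg0 : g 0 = 1) (hgrec : ∀ k, g (k + 1) = ss * σ (g k) * yi) :
    ∀ k : ℕ,
      (IsUnit (g k) ∧ MatCong (g k) 1 I) ∧
      MatCong (g (k + 1)) (g k) (I ^ q ^ k) ∧
      MatCong (g k * y) (ss * σ (g k)) (I ^ q ^ k) ∧
      (∀ h : Matrix (Fin n) (Fin n) (LaurentSeries R), IsUnit h → MatCong h 1 I →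
        MatCong (h * y) (ss * σ h) (I ^ q ^ k) → MatCong h (g k) (I ^ q ^ k)) := by
  haveI : Fact p.Prime := ⟨hp⟩
  haveI : ExpChar R p := ExpChar.prime hp
  obtain ⟨φ, hφ⟩ : ∃ φ : R →+* R, ∀ a, φ a = a ^ q :=
    ⟨iterateFrobenius R p s0, fun a => by rw [iterateFrobenius_def, hq]⟩
  have hσ' : ∀ A i j t, (σ A i j).coeff t = φ ((A i j).coeff t) := fun A i j t => by
    rw [hσ, hφ]
  have hq0 : q ≠ 0 := by rw [hq]; exact pow_ne_zero _ hp.ne_zero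
  have hσ1 : σ 1 = 1 := by
    ext i j t
    rw [hσ']
    by_cases hij : i = j
    · subst hij
      rw [Matrix.one_apply_eq, HahnSeries.coeff_one]
      split_ifs <;> simp
    · rw [Matrix.one_apply_ne hij]; simp
  have hσm : ∀ A B, σ (A * B) = σ A * σ B := by
    intro A B
    ext i j t
    rw [hσ', Matrix.mul_apply, Matrix.mul_apply, coeff_sum', coeff_sum', map_sum]
    exact Finset.sum_congr rfl fun c _ =>
      (coeff_mul_frob φ _ _ _ _ (hσ' A i c) (hσ' B c j) t).symm
  have hσu : ∀ A, IsUnit A → IsUnit (σ A) := by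
    rintro _ ⟨u, rfl⟩
    exact ⟨⟨σ u, σ ↑u⁻¹, by rw [← hσm, Units.mul_inv, hσ1], by
      rw [← hσm, Units.inv_mul, hσ1]⟩, rfl⟩
  have hσc : ∀ A B k, MatCong A B (I ^ q ^ k) → MatCong (σ A) (σ B) (I ^ q ^ (k + 1)) := by
    intro A B k h i j t
    have := Ideal.pow_mem_pow (h i j t) q
    rw [← hφ, Matrix.sub_apply, HahnSeries.coeff_sub, map_sub, ← hσ', ← hσ', ← pow_mul,
      ← pow_succ] at this
    exact this
  have hbc : ∀ k, MatCong (g k * y) (ss * σ (g k)) (I ^ q ^ k) →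
      MatCong (g (k + 1)) (g k) (I ^ q ^ k) := by
    intro k h
    have := (h.mul_right' yi).symm'
    rwa [mul_assoc (g k), hyyi, mul_one, ← hgrec] at this
  have hyiu : IsUnit yi := ⟨⟨yi, y, hyiy, hyyi⟩, rfl⟩
  intro k
  induction k with
  | zero =>
    have hc : MatCong (g 0 * y) (ss * σ (g 0)) (I ^ q ^ 0) := by
      rw [hg0, hσ1, one_mul, mul_one, pow_zero, pow_one]
      exact hsy.symm'
    refine ⟨⟨by rw [hg0]; exact isUnit_one, ?_⟩, hbc 0 hc, hc, ?_⟩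
    · rw [hg0]; intro i j t; simp
    · intro h _ h1 _
      rw [hg0, pow_zero, pow_one]
      exact h1
  | succ k ih =>
    obtain ⟨⟨hu, h1⟩, hb, hc, hd⟩ := ih
    have hgy : g (k + 1) * y = ss * σ (g k) := by
      rw [hgrec, mul_assoc, hyiy, mul_one]
    have hc' : MatCong (g (k + 1) * y) (ss * σ (g (k + 1))) (I ^ q ^ (k + 1)) := by
      rw [hgy]
      exact (hσc _ _ k hb.symm').mul_left' ss
    refine ⟨⟨?_, ?_⟩, hbc _ hc', hc', ?_⟩
    · rw [hgrec]
      exact (hss.mul (hσu _ hu)).mul hyiu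
    · exact (hb.mono' (Ideal.pow_le_self (pow_ne_zero _ hq0))).trans' h1
    · intro h hhu hh1 hh
      have hk := hd h hhu hh1
        (hh.mono' (Ideal.pow_le_pow_right (Nat.pow_le_pow_right (Nat.pos_of_ne_zero hq0)
          (Nat.le_succ k))))
      have h2 := (hh.trans' ((hσc _ _ k hk).mul_left' ss)).mul_right' yi
      rwa [mul_assoc h, hyyi, mul_one, ← hgrec] at h2
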